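/- Let n ≥ 2 and let 𝔹ⁿ = {x ∈ ℝⁿ : |x| < 1} be the unit ball, so that d_{𝔹ⁿ}(x) = 1 − |x|. For every c > 0, neither the function φᶜ(x,y) = |x−y|/(c·L(1−|x|, 1−|y|)) nor the function φ̂ᶜ(x,y) = log(1 + |x−y|/(c·L(1−|x|, 1−|y|))) is a metric on 𝔹ⁿ: in each case the triangle inequality fails for some triple of points of 𝔹ⁿ. -/

import Mathlib

/-- The logarithmic mean of two positive reals. -/
noncomputable def logMean (a b : ℝ) : ℝ :=
  if a = b then a else (a - b) / (Real.log a - Real.log b)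

/-!
Test the triangle inequality on the triple `x`, `0`, `-x`, and let `t = -log (1 - ‖x‖)`. Along
each leg the logarithmic mean cancels the numerator `‖x‖`, so that both legs have length `t / c`,
whereas `x` and `-x` are equally far from the boundary, so that the third side is
`2 * ‖x‖ / (c * (1 - ‖x‖)) = 2 * (exp t - 1) / c`. As `x` approaches the boundary this exponential
exceeds every quadratic in `t`, in particular `(1 + t / c) ^ 2 - 1`, which is what the failure for
`log (1 + ·)` amounts to; the failure without the logarithm is weaker.
-/

open Real

theorem logMean_self (a : ℝ) : logMean a a = a :=
  if_pos rfl

theorem logMean_comm (a b : ℝ) : logMean a b = logMean b a := by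
  rcases eq_or_ne a b with rfl | hab
  · rfl
  · rw [logMean, logMean, if_neg hab, if_neg hab.symm, ← neg_div_neg_eq, neg_sub, neg_sub]

theorem logMean_one_right {a : ℝ} (ha : a ≠ 1) : logMean a 1 = (a - 1) / log a := by
  rw [logMean, if_neg ha, log_one, sub_zero]

section LogMeanRatio

variable {E : Type*} [NormedAddCommGroup E]

/-- The function `φᶜ` on the unit ball of a normed space: the distance of two points divided by `c`
times the logarithmic mean of their distances `1 - ‖x‖` and `1 - ‖y‖` to the unit sphere. It is
defined for all `x` and `y`, but meaningful only in the open unit ball. -/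
noncomputable def logMeanRatio (c : ℝ) (x y : E) : ℝ :=
  dist x y / (c * logMean (1 - ‖x‖) (1 - ‖y‖))

theorem logMeanRatio_comm (c : ℝ) (x y : E) : logMeanRatio c x y = logMeanRatio c y x := by
  rw [logMeanRatio, logMeanRatio, dist_comm, logMean_comm]

theorem logMeanRatio_zero_right (c : ℝ) (x : E) :
    logMeanRatio c x 0 = -log (1 - ‖x‖) / c := by
  rcases eq_or_ne x 0 with rfl | hx
  · simp [logMeanRatio]
  · have hx' : ‖x‖ ≠ 0 := norm_ne_zero_iff.mpr hx
    have hne : 1 - ‖x‖ ≠ 1 := by simpa using hx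
    rw [logMeanRatio, dist_zero_right, norm_zero, sub_zero, logMean_one_right hne,
      sub_sub_cancel_left]
    field_simp

theorem logMeanRatio_neg_right [NormedSpace ℝ E] (c : ℝ) (x : E) :
    logMeanRatio c x (-x) = 2 * ‖x‖ / (c * (1 - ‖x‖)) := by
  have hdist : dist x (-x) = 2 * ‖x‖ := by
    rw [dist_eq_norm, sub_neg_eq_add, ← two_smul ℝ x, norm_smul, norm_two]
  rw [logMeanRatio, hdist, norm_neg, logMean_self]

end LogMeanRatio

theorem cubic_le_exp_of_nonneg {t : ℝ} (ht : 0 ≤ t) :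
    1 + t + t ^ 2 / 2 + t ^ 3 / 6 ≤ exp t := by
  simpa [Finset.sum_range_succ, Nat.factorial] using sum_le_exp_of_nonneg ht 4

theorem one_add_div_sq_lt_one_add_exp {c t : ℝ} (hc : 0 < c) (ht : 0 < t)
    (hct : 1 < c * (1 + t / 3)) :
    (1 + t / c) ^ 2 < 1 + 2 * (exp t - 1) / c := by
  have hinv : 1 / c < 1 + t / 3 := (div_lt_iff₀' hc).mpr hct
  calc (1 + t / c) ^ 2 = 1 + (2 * t + t ^ 2 * (1 / c)) / c := by ring
    _ < 1 + (2 * t + t ^ 2 * (1 + t / 3)) / c := by gcongr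
    _ ≤ 1 + 2 * (exp t - 1) / c := by
      gcongr
      linarith [cubic_le_exp_of_nonneg ht.le]

theorem log_one_add_add_log_one_add_lt {a b d : ℝ} (ha : 0 ≤ a) (hb : 0 ≤ b)
    (h : (1 + a) * (1 + b) < 1 + d) : log (1 + a) + log (1 + b) < log (1 + d) := by
  rw [← log_mul (by positivity) (by positivity)]
  exact log_lt_log (by positivity) h

theorem stmt10_general (E : Type*) [NormedAddCommGroup E] [NormedSpace ℝ E] [Nontrivial E]
    {c : ℝ} (hc : 0 < c) :
    ∃ x y z : E, ‖x‖ < 1 ∧ ‖y‖ < 1 ∧ ‖z‖ < 1 ∧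
      logMeanRatio c x z + logMeanRatio c z y < logMeanRatio c x y ∧
      log (1 + logMeanRatio c x z) + log (1 + logMeanRatio c z y) <
        log (1 + logMeanRatio c x y) := by
  obtain ⟨t, ht, hct⟩ : ∃ t > 0, 1 < c * (1 + t / 3) :=
    ⟨3 / c, by positivity, by field_simp; linarith⟩
  have hexp : exp (-t) < 1 := exp_lt_one_iff.mpr (neg_neg_of_pos ht)
  obtain ⟨x, hx⟩ : ∃ x : E, ‖x‖ = 1 - exp (-t) := exists_norm_eq E (sub_nonneg.mpr hexp.le)
  have hx_lt : ‖x‖ < 1 := hx ▸ sub_lt_self 1 (exp_pos _)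
  have hleg : logMeanRatio c x 0 = t / c := by
    rw [logMeanRatio_zero_right, hx, sub_sub_cancel, log_exp, neg_neg]
  have hleg' : logMeanRatio c 0 (-x) = t / c := by
    rw [logMeanRatio_comm, logMeanRatio_zero_right, norm_neg, hx, sub_sub_cancel, log_exp, neg_neg]
  have hside : logMeanRatio c x (-x) = 2 * (exp t - 1) / c := by
    rw [logMeanRatio_neg_right, hx, sub_sub_cancel, exp_neg]
    field_simp
  have hlegs : 0 < t / c := div_pos ht hc
  have hlt := one_add_div_sq_lt_one_add_exp hc ht hct
  refine ⟨x, -x, 0, hx_lt, by rwa [norm_neg], by rw [norm_zero]; exact one_pos, ?_, ?_⟩ <;>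
    rw [hleg, hleg', hside]
  · linarith [sq_nonneg (t / c)]
  · exact log_one_add_add_log_one_add_lt hlegs.le hlegs.le (by rwa [← sq])

theorem stmt10 (n : ℕ) (hn : 2 ≤ n) (c : ℝ) (hc : 0 < c) :
    (∃ x ∈ {p : EuclideanSpace ℝ (Fin n) | ‖p‖ < 1},
      ∃ y ∈ {p : EuclideanSpace ℝ (Fin n) | ‖p‖ < 1},
      ∃ z ∈ {p : EuclideanSpace ℝ (Fin n) | ‖p‖ < 1},
        dist x z / (c * logMean (1 - ‖x‖) (1 - ‖z‖)) +
          dist z y / (c * logMean (1 - ‖z‖) (1 - ‖y‖)) <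
          dist x y / (c * logMean (1 - ‖x‖) (1 - ‖y‖))) ∧
    (∃ x ∈ {p : EuclideanSpace ℝ (Fin n) | ‖p‖ < 1},
      ∃ y ∈ {p : EuclideanSpace ℝ (Fin n) | ‖p‖ < 1},
      ∃ z ∈ {p : EuclideanSpace ℝ (Fin n) | ‖p‖ < 1},
        Real.log (1 + dist x z / (c * logMean (1 - ‖x‖) (1 - ‖z‖))) +
          Real.log (1 + dist z y / (c * logMean (1 - ‖z‖) (1 - ‖y‖))) <
          Real.log (1 + dist x y / (c * logMean (1 - ‖x‖) (1 - ‖y‖)))) := by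
  have : NeZero n := ⟨by lia⟩
  obtain ⟨x, y, z, hx, hy, hz, hratio, hlog⟩ := stmt10_general (EuclideanSpace ℝ (Fin n)) hc
  exact ⟨⟨x, hx, y, hy, z, hz, hratio⟩, ⟨x, hx, y, hy, z, hz, hlog⟩⟩
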